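/- arXiv:2010.10559 — 2 statements merged into one kernel-verified Lean document; each statement's English description precedes it below -/
import Mathlib

section
/- (Global convergence for the (1D1B) setup with small desired distance.) Let p₁, p₂ : ℝ → ℝ² be differentiable curves with p₁(t) ≠ p₂(t) for all t ≥ 0, satisfying for all t ≥ 0 the closed-loop equations ṗ₁(t) = K_d·e₁₂d(t)·z₁₂(t) and ṗ₂(t) = −K_b·(g₁₂(t) − g₁₂*). If d₁₂* < √3·(K_b/K_d)^(1/3), then there exists a point q₁ ∈ ℝ² such that p₁(t) → q₁ and p₂(t) → q₁ + d₁₂*·g₁₂* as t → ∞. -/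
/-!
Let `z = p₂ - p₁`, `d = ‖z‖`, and let `c` be the cosine of the angle between `z` and `g*`. Then

  `d' = -K_b (1 - c) - K_d (d² - d*²) d`,   `c' = (K_b / d) (1 - c²)`.

The bound on `d*` says exactly that `d` decreases at a uniform rate while `c = -1`, so `c` cannot
stay equal to `-1` without a collision. Once `c > -1`, boundedness of `d` makes `1 - c` decay
exponentially. The quantity `d (1 + c)` has logarithmic derivative `-K_d (d² - d*²)`, which keeps
`d` away from `0`, and `(d - d*)²` is then damped exponentially up to the vanishing forcing `1 - c`,
so `d → d*`. Since `‖p₂'‖ = K_b √(2 (1 - c))` is integrable, `p₂` converges, and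
`p₁ = p₂ - z` converges with it.
-/

section

open Filter Set Topology MeasureTheory

section HalfLine

variable {f f' g g' : ℝ → ℝ} {T : ℝ}

lemma le_gronwallBound_of_deriv_le {K ε : ℝ}
    (hf : ∀ t, T ≤ t → HasDerivWithinAt f (f' t) (Ici T) t)
    (hle : ∀ t, T ≤ t → f' t ≤ K * f t + ε) {t : ℝ} (ht : T ≤ t) :
    f t ≤ gronwallBound (f T) K ε (t - T) :=
  le_gronwallBound_of_liminf_deriv_right_le (f' := f')
    (fun s hs => (hf s hs.1).continuousWithinAt.mono Icc_subset_Ici_self)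
    (fun s hs _ hr =>
      ((hf s hs.1).mono (Ici_subset_Ici.2 hs.1)).liminf_right_slope_le hr)
    le_rfl (fun s hs => hle s hs.1) t ⟨ht, le_rfl⟩

lemma le_mul_exp_of_deriv_le_neg_mul {q : ℝ}
    (hf : ∀ t, T ≤ t → HasDerivWithinAt f (f' t) (Ici T) t)
    (hle : ∀ t, T ≤ t → f' t ≤ -q * f t) {t : ℝ} (ht : T ≤ t) :
    f t ≤ f T * Real.exp (q * T) * Real.exp (-q * t) := by
  have hbound := le_gronwallBound_of_deriv_le (K := -q) (ε := 0) hf (by simpa using hle) ht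
  rw [gronwallBound_ε0] at hbound
  rwa [mul_assoc, ← Real.exp_add, show q * T + -q * t = -q * (t - T) by ring]

lemma le_of_deriv_neg_of_eq {M : ℝ}
    (hf : ∀ t, T ≤ t → HasDerivWithinAt f (f' t) (Ici T) t) (hT : f T ≤ M)
    (hneg : ∀ t, T ≤ t → f t = M → f' t < 0) {t : ℝ} (ht : T ≤ t) : f t ≤ M :=
  image_le_of_deriv_right_lt_deriv_boundary (f' := f') (B := fun _ => M) (B' := fun _ => 0)
    (fun s hs => (hf s hs.1).continuousWithinAt.mono Icc_subset_Ici_self)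
    (fun s hs => (hf s hs.1).mono (Ici_subset_Ici.2 hs.1)) hT
    (fun s => hasDerivAt_const s M) (fun s hs => hneg s hs.1) ⟨ht, le_rfl⟩

lemma tendsto_const_mul_exp_neg_mul_atTop (C : ℝ) {q : ℝ} (hq : 0 < q) :
    Tendsto (fun t => C * Real.exp (-q * t)) atTop (𝓝 0) := by
  have hlin : Tendsto (fun t => -q * t) atTop atBot :=
    tendsto_id.const_mul_atTop_of_neg (neg_neg_of_pos hq)
  simpa using (Real.tendsto_exp_atBot.comp hlin).const_mul C

-- `f + (2 / q) g` is a Lyapunov function: half of the decay of `g` absorbs the forcing of `f`.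
lemma tendsto_zero_of_deriv_le_neg_mul_add {k q : ℝ} (hk : 0 < k) (hq : 0 < q)
    (hf : ∀ t, T ≤ t → HasDerivWithinAt f (f' t) (Ici T) t)
    (hg : ∀ t, T ≤ t → HasDerivWithinAt g (g' t) (Ici T) t)
    (hf0 : ∀ t, T ≤ t → 0 ≤ f t) (hg0 : ∀ t, T ≤ t → 0 ≤ g t)
    (hf' : ∀ t, T ≤ t → f' t ≤ -k * f t + g t) (hg' : ∀ t, T ≤ t → g' t ≤ -q * g t) :
    Tendsto f atTop (𝓝 0) := by
  set r := min k (q / 2)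
  have hr : 0 < r := lt_min hk (half_pos hq)
  have hderiv : ∀ t, T ≤ t →
      HasDerivWithinAt (fun s => f s + 2 / q * g s) (f' t + 2 / q * g' t) (Ici T) t :=
    fun t ht => (hf t ht).add ((hg t ht).const_mul _)
  have hdecay : ∀ t, T ≤ t → f' t + 2 / q * g' t ≤ -r * (f t + 2 / q * g t) := by
    intro t ht
    have hforcing : 2 / q * g' t ≤ -(2 * g t) :=
      calc 2 / q * g' t ≤ 2 / q * (-q * g t) := by gcongr; exact hg' t ht
        _ = -(2 * g t) := by field_simp
    have hrf : r * f t ≤ k * f t := by gcongr; exacts [hf0 t ht, min_le_left _ _]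
    have hrg : r * (2 / q * g t) ≤ g t :=
      calc r * (2 / q * g t) ≤ q / 2 * (2 / q * g t) := by
            have := hg0 t ht
            gcongr
            exact min_le_right _ _
        _ = g t := by field_simp
    linarith [hf' t ht]
  refine tendsto_of_tendsto_of_tendsto_of_le_of_le' tendsto_const_nhds
    (tendsto_const_mul_exp_neg_mul_atTop ((f T + 2 / q * g T) * Real.exp (r * T)) hr) ?_ ?_
  · filter_upwards [eventually_ge_atTop T] with t ht using hf0 t ht
  · filter_upwards [eventually_ge_atTop T] with t ht
    have hg_nonneg : 0 ≤ 2 / q * g t := mul_nonneg (by positivity) (hg0 t ht)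
    linarith [le_mul_exp_of_deriv_le_neg_mul hderiv hdecay ht]

end HalfLine

lemma exists_tendsto_of_norm_deriv_sq_le_exp {F : Type*} [NormedAddCommGroup F] [NormedSpace ℝ F]
    [CompleteSpace F] {f f' : ℝ → F} {C q T : ℝ} (hq : 0 < q)
    (hf : ∀ t ∈ Ioi T, HasDerivAt f (f' t) t)
    (hle : ∀ t ∈ Ioi T, ‖f' t‖ ^ 2 ≤ C * Real.exp (-q * t)) : ∃ y, Tendsto f atTop (𝓝 y) := by
  have hbound : ∀ t ∈ Ioi T, ‖f' t‖ ≤ √C * Real.exp (-(q / 2) * t) := fun t ht =>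
    calc ‖f' t‖ ≤ √(C * Real.exp (-q * t)) := Real.le_sqrt_of_sq_le (hle t ht)
      _ = √C * Real.exp (-(q / 2) * t) := by
        rw [Real.sqrt_mul' _ (Real.exp_pos _).le, ← Real.exp_half]
        ring_nf
  have hmeas : AEStronglyMeasurable f' (volume.restrict (Ioi T)) :=
    (aestronglyMeasurable_deriv f _).congr <|
      (ae_restrict_mem measurableSet_Ioi).mono fun t ht => (hf t ht).deriv
  have hint : IntegrableOn f' (Ioi T) :=
    Integrable.mono' ((exp_neg_integrableOn_Ioi T (half_pos hq)).const_mul (√C)) hmeas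
      ((ae_restrict_mem measurableSet_Ioi).mono hbound)
  exact ⟨_, tendsto_limUnder_of_hasDerivAt_of_integrableOn_Ioi hf hint⟩

/-- A solution on `[0, ∞)` of the closed-loop system in polar form, without collision: `d` is the
distance between the agents, `c` the cosine of the angle between the actual and the desired bearing,
and `a` the desired distance. -/
structure IsDistCosSolution (Kd Kb a : ℝ) (d c : ℝ → ℝ) : Prop where
  dist_pos : ∀ t, 0 ≤ t → 0 < d t
  neg_one_le_cos : ∀ t, 0 ≤ t → -1 ≤ c t
  cos_le_one : ∀ t, 0 ≤ t → c t ≤ 1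
  hasDerivWithinAt_dist : ∀ t, 0 ≤ t →
    HasDerivWithinAt d (-Kb * (1 - c t) - Kd * (d t ^ 2 - a ^ 2) * d t) (Ici 0) t
  hasDerivWithinAt_cos : ∀ t, 0 ≤ t → HasDerivWithinAt c (Kb / d t * (1 - c t ^ 2)) (Ici 0) t

namespace IsDistCosSolution

variable {Kd Kb a T : ℝ} {d c : ℝ → ℝ}

lemma exists_dist_le (h : IsDistCosSolution Kd Kb a d c) (hKd : 0 < Kd) (hKb : 0 ≤ Kb) :
    ∃ D, 0 < D ∧ ∀ t, 0 ≤ t → d t ≤ D := by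
  refine ⟨max (d 0) (|a| + 1), lt_max_of_lt_left (h.dist_pos 0 le_rfl), fun t ht =>
    le_of_deriv_neg_of_eq h.hasDerivWithinAt_dist (le_max_left _ _) (fun s hs hds => ?_) ht⟩
  have hda : |a| < d s := (lt_add_one _).trans_le (hds ▸ le_max_right _ _)
  have hsq : 0 < d s ^ 2 - a ^ 2 := sub_pos.2 (sq_lt_sq' (by linarith [neg_abs_le a])
    ((le_abs_self a).trans_lt hda))
  have hrestoring : 0 < Kd * (d s ^ 2 - a ^ 2) * d s :=
    mul_pos (mul_pos hKd hsq) (h.dist_pos s hs)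
  have hbearing : 0 ≤ Kb * (1 - c s) := mul_nonneg hKb (sub_nonneg.2 (h.cos_le_one s hs))
  linarith

-- While `c = -1`, the distance obeys `d' = -2 K_b + K_d (a² - d²) d`, and the cubic is maximal at
-- `d = a / √3`, with value `2 (a / √3)³`.
lemma exists_neg_one_lt_cos (h : IsDistCosSolution Kd Kb a d c) (hKd : 0 ≤ Kd) (ha : 0 ≤ a)
    (hthr : Kd * (a / √3) ^ 3 < Kb) : ∃ T, 0 ≤ T ∧ -1 < c T := by
  by_contra! hle
  have hc : ∀ t, 0 ≤ t → c t = -1 := fun t ht => (hle t ht).antisymm (h.neg_one_le_cos t ht)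
  set s := a / √3
  set ε := 2 * (Kb - Kd * s ^ 3)
  have hε : 0 < ε := by simpa [ε] using hthr
  have hs : 0 ≤ s := by positivity
  have has : a ^ 2 = 3 * s ^ 2 := by
    rw [div_pow, Real.sq_sqrt zero_le_three]; ring
  have hspeed : ∀ t, 0 ≤ t →
      -Kb * (1 - c t) - Kd * (d t ^ 2 - a ^ 2) * d t ≤ 0 * d t + -ε := by
    intro t ht
    have hcubic : 0 ≤ Kd * ((d t - s) ^ 2 * (d t + 2 * s)) :=
      mul_nonneg hKd (mul_nonneg (sq_nonneg _) (by linarith [h.dist_pos t ht]))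
    rw [hc t ht, has]
    linear_combination hcubic
  have hcollision : 0 ≤ d 0 / ε := div_nonneg (h.dist_pos 0 le_rfl).le hε.le
  have hd := le_gronwallBound_of_deriv_le h.hasDerivWithinAt_dist hspeed hcollision
  simp only [gronwallBound_K0, sub_zero, neg_mul, mul_div_cancel₀ _ hε.ne', add_neg_cancel] at hd
  exact hd.not_gt (h.dist_pos _ hcollision)

lemma hasDerivWithinAt_one_sub_cos (h : IsDistCosSolution Kd Kb a d c) (hT : 0 ≤ T)
    {t : ℝ} (ht : T ≤ t) :
    HasDerivWithinAt (fun s => 1 - c s) (-(Kb / d t * (1 - c t ^ 2))) (Ici T) t :=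
  ((h.hasDerivWithinAt_cos t (hT.trans ht)).const_sub 1).mono (Ici_subset_Ici.2 hT)

lemma monotoneOn_cos (h : IsDistCosSolution Kd Kb a d c) (hKb : 0 ≤ Kb) :
    MonotoneOn c (Ici 0) := by
  refine monotoneOn_of_hasDerivWithinAt_nonneg (convex_Ici 0)
    (fun t ht => (h.hasDerivWithinAt_cos t ht).continuousWithinAt)
    (fun t ht => (h.hasDerivWithinAt_cos t (interior_subset ht)).mono interior_subset)
    fun t ht => ?_
  have ht₀ : 0 ≤ t := interior_subset ht
  have hsq : c t ^ 2 ≤ 1 :=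
    (sq_le_one_iff_abs_le_one _).2 (abs_le.2 ⟨h.neg_one_le_cos t ht₀, h.cos_le_one t ht₀⟩)
  exact mul_nonneg (div_nonneg hKb (h.dist_pos t ht₀).le) (sub_nonneg.2 hsq)

lemma exists_deriv_one_sub_cos_le (h : IsDistCosSolution Kd Kb a d c) (hKd : 0 < Kd)
    (hKb : 0 < Kb) (hT : 0 ≤ T) (hcT : -1 < c T) :
    ∃ q, 0 < q ∧ ∀ t, T ≤ t → -(Kb / d t * (1 - c t ^ 2)) ≤ -q * (1 - c t) := by
  obtain ⟨D, hD, hdD⟩ := h.exists_dist_le hKd hKb.le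
  refine ⟨Kb / D * (1 + c T), mul_pos (div_pos hKb hD) (by linarith), fun t ht => ?_⟩
  have ht₀ := hT.trans ht
  have hrate : Kb / D * (1 + c T) ≤ Kb / d t * (1 + c t) :=
    mul_le_mul (div_le_div_of_nonneg_left hKb.le (h.dist_pos t ht₀) (hdD t ht₀))
      (by linarith [h.monotoneOn_cos hKb.le hT ht₀ ht]) (by linarith)
      (div_pos hKb (h.dist_pos t ht₀)).le
  linear_combination mul_le_mul_of_nonneg_right hrate (sub_nonneg.2 (h.cos_le_one t ht₀))

lemma exists_one_sub_cos_le_exp (h : IsDistCosSolution Kd Kb a d c) (hKd : 0 < Kd)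
    (hKb : 0 < Kb) (hT : 0 ≤ T) (hcT : -1 < c T) :
    ∃ C q, 0 < q ∧ ∀ t, T ≤ t → 1 - c t ≤ C * Real.exp (-q * t) := by
  obtain ⟨q, hq, hrate⟩ := h.exists_deriv_one_sub_cos_le hKd hKb hT hcT
  exact ⟨_, q, hq, fun t ht =>
    le_mul_exp_of_deriv_le_neg_mul (fun s hs => h.hasDerivWithinAt_one_sub_cos hT hs) hrate ht⟩

lemma tendsto_cos (h : IsDistCosSolution Kd Kb a d c) (hKd : 0 < Kd) (hKb : 0 < Kb)
    (hT : 0 ≤ T) (hcT : -1 < c T) : Tendsto c atTop (𝓝 1) := by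
  obtain ⟨C, q, hq, hle⟩ := h.exists_one_sub_cos_le_exp hKd hKb hT hcT
  have hlower : Tendsto (fun t => 1 - C * Real.exp (-q * t)) atTop (𝓝 1) := by
    simpa using (tendsto_const_mul_exp_neg_mul_atTop C hq).const_sub 1
  refine tendsto_of_tendsto_of_tendsto_of_le_of_le' hlower tendsto_const_nhds ?_ ?_
  · filter_upwards [eventually_ge_atTop T] with t ht using sub_le_comm.1 (hle t ht)
  · filter_upwards [eventually_ge_atTop 0] with t ht using h.cos_le_one t ht

lemma hasDerivWithinAt_dist_mul_one_add_cos (h : IsDistCosSolution Kd Kb a d c) {t : ℝ}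
    (ht : 0 ≤ t) :
    HasDerivWithinAt (fun s => d s * (1 + c s))
      (-(Kd * (d t ^ 2 - a ^ 2)) * (d t * (1 + c t))) (Ici 0) t := by
  have hd := (h.dist_pos t ht).ne'
  have hmul := (h.hasDerivWithinAt_dist t ht).mul ((h.hasDerivWithinAt_cos t ht).const_add 1)
  refine hmul.congr_deriv ?_
  field_simp
  ring

lemma exists_le_dist (h : IsDistCosSolution Kd Kb a d c) (hKd : 0 < Kd) (hKb : 0 ≤ Kb)
    (ha : 0 < a) (hT : 0 ≤ T) (hcT : -1 < c T) : ∃ m, 0 < m ∧ ∀ t, T ≤ t → m ≤ d t := by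
  have hκ : 0 < 1 + c T := by linarith
  have hmono : ∀ t, T ≤ t → 1 + c T ≤ 1 + c t := fun t ht =>
    add_le_add_right (h.monotoneOn_cos hKb hT (hT.trans ht) ht) 1
  set M := min (d T * (1 + c T)) (a / 2 * (1 + c T))
  have hM : 0 < M := lt_min (mul_pos (h.dist_pos T hT) hκ) (by positivity)
  have hincreasing : ∀ t, T ≤ t → -(d t * (1 + c t)) = -M →
      -(-(Kd * (d t ^ 2 - a ^ 2)) * (d t * (1 + c t))) < 0 := by
    intro t ht heq
    have hd := h.dist_pos t (hT.trans ht)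
    have hda : d t ≤ a / 2 := by
      refine le_of_mul_le_mul_right ?_ (hκ.trans_le (hmono t ht))
      calc d t * (1 + c t) = M := neg_injective heq
        _ ≤ a / 2 * (1 + c T) := min_le_right _ _
        _ ≤ a / 2 * (1 + c t) := mul_le_mul_of_nonneg_left (hmono t ht) (by positivity)
    have hsq : d t ^ 2 < a ^ 2 := by gcongr; linarith
    rw [neg_injective heq]
    linarith [mul_pos (mul_pos hKd (sub_pos.2 hsq)) hM]
  refine ⟨M / 2, half_pos hM, fun t ht => ?_⟩
  have hderiv : ∀ s, T ≤ s → HasDerivWithinAt (fun x => -(d x * (1 + c x)))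
      (-(-(Kd * (d s ^ 2 - a ^ 2)) * (d s * (1 + c s)))) (Ici T) s := fun s hs =>
    ((h.hasDerivWithinAt_dist_mul_one_add_cos (hT.trans hs)).mono (Ici_subset_Ici.2 hT)).neg
  have hle : -(d t * (1 + c t)) ≤ -M :=
    le_of_deriv_neg_of_eq hderiv (neg_le_neg (min_le_left _ _)) hincreasing ht
  have hcos : d t * (1 + c t) ≤ d t * 2 :=
    mul_le_mul_of_nonneg_left (by linarith [h.cos_le_one t (hT.trans ht)])
      (h.dist_pos t (hT.trans ht)).le
  linarith

lemma tendsto_dist (h : IsDistCosSolution Kd Kb a d c) (hKd : 0 < Kd) (hKb : 0 < Kb)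
    (ha : 0 < a) (hT : 0 ≤ T) (hcT : -1 < c T) : Tendsto d atTop (𝓝 a) := by
  obtain ⟨q, hq, hrate⟩ := h.exists_deriv_one_sub_cos_le hKd hKb hT hcT
  obtain ⟨m, hm, hmd⟩ := h.exists_le_dist hKd hKb.le ha hT hcT
  have hcos : ∀ t, T ≤ t → 0 ≤ 1 - c t := fun t ht => sub_nonneg.2 (h.cos_le_one t (hT.trans ht))
  have hB : 0 < 2 * a * Kb := by positivity
  have hderiv := fun t (ht : T ≤ t) =>
    (h.hasDerivWithinAt_dist t (hT.trans ht)).mono (Ici_subset_Ici.2 hT)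
  have hsq : Tendsto (fun t => (d t - a) ^ 2) atTop (𝓝 0) := by
    refine tendsto_zero_of_deriv_le_neg_mul_add (k := 2 * (Kd * m * a)) (by positivity) hq
      (fun t ht => ((hderiv t ht).sub_const a).pow 2)
      (fun t ht => (h.hasDerivWithinAt_one_sub_cos hT ht).const_mul (2 * a * Kb))
      (fun t _ => sq_nonneg _) (fun t ht => mul_nonneg hB.le (hcos t ht)) (fun t ht => ?_)
      (fun t ht => by linear_combination mul_le_mul_of_nonneg_left (hrate t ht) hB.le)
    have hd := h.dist_pos t (hT.trans ht)
    have hdamping : Kd * m * a * (d t - a) ^ 2 ≤ Kd * d t * (d t + a) * (d t - a) ^ 2 := by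
      gcongr
      exacts [hmd t ht, by linarith]
    have hforcing : 0 ≤ d t * (Kb * (1 - c t)) := by
      have := hcos t ht
      positivity
    linear_combination 2 * hdamping + 2 * hforcing
  rw [tendsto_iff_norm_sub_tendsto_zero]
  simpa [Real.sqrt_sq_eq_abs] using hsq.sqrt

end IsDistCosSolution

section InnerProductSpace

variable {E : Type*} [NormedAddCommGroup E] [InnerProductSpace ℝ E]

lemma hasDerivWithinAt_norm {z : ℝ → E} {z' : E} {s : Set ℝ} {t : ℝ}
    (hz : HasDerivWithinAt z z' s t) (h0 : z t ≠ 0) :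
    HasDerivWithinAt (fun x => ‖z x‖) (inner ℝ (z t) z' / ‖z t‖) s t := by
  have hsqrt := hz.norm_sq.sqrt (pow_ne_zero 2 (norm_ne_zero_iff.2 h0))
  simp only [Real.sqrt_sq (norm_nonneg _)] at hsqrt
  exact hsqrt.congr_deriv (mul_div_mul_left _ _ two_ne_zero)

/-- The cosine of the angle between a unit vector `g` and `z`; it is `0` for `z = 0`. -/
noncomputable def cosBearing (g z : E) : ℝ := inner ℝ g z / ‖z‖

lemma abs_cosBearing_le_one {g : E} (hg : ‖g‖ = 1) (z : E) : |cosBearing g z| ≤ 1 := by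
  simpa [cosBearing, hg] using abs_real_inner_div_norm_mul_norm_le_one g z

lemma norm_bearing_sub_sq {g z : E} (hg : ‖g‖ = 1) (hz : z ≠ 0) :
    ‖‖z‖⁻¹ • z - g‖ ^ 2 = 2 * (1 - cosBearing g z) := by
  have hunit : ‖‖z‖⁻¹ • z‖ = 1 := norm_smul_inv_norm (𝕜 := ℝ) hz
  rw [norm_sub_sq_real, hunit, hg, real_inner_smul_left, real_inner_comm, cosBearing]
  ring

/-- The velocity of the relative position `z = p₂ - p₁`: the first agent controls the distance
with gain `Kd`, the second one the bearing with gain `Kb`. -/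
noncomputable def relativeVelocity (Kd Kb a : ℝ) (g z : E) : E :=
  (-Kb) • (‖z‖⁻¹ • z - g) - (Kd * (‖z‖ ^ 2 - a ^ 2)) • z

variable {Kd Kb a : ℝ} {g : E}

lemma inner_relativeVelocity_left {z : E} (hz : z ≠ 0) :
    inner ℝ z (relativeVelocity Kd Kb a g z) =
      (-Kb * (1 - cosBearing g z) - Kd * (‖z‖ ^ 2 - a ^ 2) * ‖z‖) * ‖z‖ := by
  have hz' : ‖z‖ ≠ 0 := norm_ne_zero_iff.2 hz
  simp only [relativeVelocity, cosBearing, inner_sub_right, inner_smul_right,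
    real_inner_self_eq_norm_sq, real_inner_comm g z]
  field_simp

lemma inner_relativeVelocity (hg : ‖g‖ = 1) (z : E) :
    inner ℝ g (relativeVelocity Kd Kb a g z) =
      Kb * (1 - cosBearing g z) - Kd * (‖z‖ ^ 2 - a ^ 2) * inner ℝ g z := by
  simp only [relativeVelocity, cosBearing, inner_sub_right, inner_smul_right,
    real_inner_self_eq_norm_sq, hg]
  ring

lemma isDistCosSolution_of_relativeVelocity (hg : ‖g‖ = 1) {z : ℝ → E}
    (h0 : ∀ t, 0 ≤ t → z t ≠ 0)
    (hz : ∀ t, 0 ≤ t → HasDerivWithinAt z (relativeVelocity Kd Kb a g (z t)) (Ici 0) t) :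
    IsDistCosSolution Kd Kb a (fun t => ‖z t‖) (fun t => cosBearing g (z t)) := by
  have hpos : ∀ t, 0 ≤ t → 0 < ‖z t‖ := fun t ht => norm_pos_iff.2 (h0 t ht)
  have hnorm : ∀ t, 0 ≤ t → HasDerivWithinAt (fun s => ‖z s‖)
      (-Kb * (1 - cosBearing g (z t)) - Kd * (‖z t‖ ^ 2 - a ^ 2) * ‖z t‖) (Ici 0) t :=
    fun t ht => (hasDerivWithinAt_norm (hz t ht) (h0 t ht)).congr_deriv <| by
      rw [inner_relativeVelocity_left (h0 t ht), mul_div_cancel_right₀ _ (hpos t ht).ne']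
  refine ⟨hpos, fun t _ => (abs_le.1 (abs_cosBearing_le_one hg _)).1,
    fun t _ => (abs_le.1 (abs_cosBearing_le_one hg _)).2, hnorm, fun t ht => ?_⟩
  have hinner := (hasDerivWithinAt_const t (Ici 0) g).inner ℝ (hz t ht)
  refine (hinner.div (hnorm t ht) (hpos t ht).ne').congr_deriv ?_
  rw [inner_relativeVelocity hg, inner_zero_left, cosBearing]
  have := (hpos t ht).ne'
  field_simp
  ring

lemma tendsto_of_tendsto_norm_of_tendsto_cosBearing (hg : ‖g‖ = 1) {α : Type*} {l : Filter α}
    {z : α → E} (h0 : ∀ᶠ t in l, z t ≠ 0) (hnorm : Tendsto (fun t => ‖z t‖) l (𝓝 a))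
    (hcos : Tendsto (fun t => cosBearing g (z t)) l (𝓝 1)) : Tendsto z l (𝓝 (a • g)) := by
  have hbearing : Tendsto (fun t => ‖z t‖⁻¹ • z t) l (𝓝 g) := by
    have hsq : Tendsto (fun t => ‖‖z t‖⁻¹ • z t - g‖ ^ 2) l (𝓝 0) := by
      refine Tendsto.congr' (h0.mono fun t ht => (norm_bearing_sub_sq hg ht).symm) ?_
      simpa using (hcos.const_sub 1).const_mul 2
    rw [tendsto_iff_norm_sub_tendsto_zero]
    simpa using hsq.sqrt
  exact (hnorm.smul hbearing).congr' <| h0.mono fun t ht =>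
    smul_inv_smul₀ (norm_ne_zero_iff.2 ht) (z t)

end InnerProductSpace

lemma mul_div_sqrt_three_pow_lt {Kd Kb a : ℝ} (hKd : 0 < Kd) (hKb : 0 ≤ Kb) (ha : 0 ≤ a)
    (hthr : a < √3 * (Kb / Kd) ^ ((1 : ℝ) / 3)) : Kd * (a / √3) ^ 3 < Kb := by
  have hdiv : a / √3 < (Kb / Kd) ^ ((1 : ℝ) / 3) := by rwa [div_lt_iff₀' (by positivity)]
  have hcube : ((Kb / Kd) ^ ((1 : ℝ) / 3)) ^ 3 = Kb / Kd := by
    rw [← Real.rpow_natCast, ← Real.rpow_mul (by positivity)]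
    norm_num
  rw [← lt_div_iff₀' hKd, ← hcube]
  gcongr

theorem stmt_7_general {E : Type*} [NormedAddCommGroup E] [InnerProductSpace ℝ E] [CompleteSpace E]
    {Kd Kb dstar : ℝ} (hKd : 0 < Kd) (hKb : 0 < Kb) (hdstar : 0 < dstar)
    {gstar : E} (hgstar : ‖gstar‖ = 1) {p₁ p₂ : ℝ → E}
    (hsep : ∀ t : ℝ, 0 ≤ t → p₁ t ≠ p₂ t)
    (hp₁ : ∀ t : ℝ, 0 ≤ t → HasDerivWithinAt p₁
      ((Kd * (‖p₂ t - p₁ t‖ ^ 2 - dstar ^ 2)) • (p₂ t - p₁ t)) (Ici 0) t)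
    (hp₂ : ∀ t : ℝ, 0 ≤ t → HasDerivWithinAt p₂
      ((-Kb) • (‖p₂ t - p₁ t‖⁻¹ • (p₂ t - p₁ t) - gstar)) (Ici 0) t)
    (hthr : dstar < √3 * (Kb / Kd) ^ ((1 : ℝ) / 3)) :
    ∃ q₁ : E, Tendsto p₁ atTop (𝓝 q₁) ∧ Tendsto p₂ atTop (𝓝 (q₁ + dstar • gstar)) := by
  set z : ℝ → E := fun t => p₂ t - p₁ t
  have hz : ∀ t, 0 ≤ t → z t ≠ 0 := fun t ht => sub_ne_zero.2 (hsep t ht).symm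
  have hpolar : IsDistCosSolution Kd Kb dstar (fun t => ‖z t‖) (fun t => cosBearing gstar (z t)) :=
    isDistCosSolution_of_relativeVelocity hgstar hz fun t ht => (hp₂ t ht).sub (hp₁ t ht)
  obtain ⟨T, hT, hcT⟩ := hpolar.exists_neg_one_lt_cos hKd.le hdstar.le
    (mul_div_sqrt_three_pow_lt hKd hKb.le hdstar.le hthr)
  have hz_lim : Tendsto z atTop (𝓝 (dstar • gstar)) :=
    tendsto_of_tendsto_norm_of_tendsto_cosBearing hgstar ((eventually_ge_atTop 0).mono hz)
      (hpolar.tendsto_dist hKd hKb hdstar hT hcT) (hpolar.tendsto_cos hKd hKb hT hcT)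
  obtain ⟨C, q, hq, hcos⟩ := hpolar.exists_one_sub_cos_le_exp hKd hKb hT hcT
  obtain ⟨q₂, hq₂⟩ : ∃ q₂, Tendsto p₂ atTop (𝓝 q₂) := by
    refine exists_tendsto_of_norm_deriv_sq_le_exp (C := Kb ^ 2 * (2 * C)) (T := T) hq
      (fun t ht => (hp₂ t (hT.trans ht.le)).hasDerivAt (Ici_mem_nhds (hT.trans_lt ht)))
      fun t ht => ?_
    rw [norm_smul, mul_pow, norm_bearing_sub_sq hgstar (hz t (hT.trans ht.le)), norm_neg,
      Real.norm_eq_abs, sq_abs, mul_assoc, mul_assoc]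
    gcongr
    exact hcos t ht.le
  exact ⟨q₂ - dstar • gstar, by simpa [z] using hq₂.sub hz_lim, by simpa using hq₂⟩

end

/-- global convergence for the (1D1B) setup when
`d₁₂* < √3·(K_b/K_d)^(1/3)` (no moving configurations exist). -/
theorem stmt_7 (Kd Kb dstar : ℝ) (hKd : 0 < Kd) (hKb : 0 < Kb) (hdstar : 0 < dstar)
    (gstar : EuclideanSpace ℝ (Fin 2)) (hgstar : ‖gstar‖ = 1)
    (p₁ p₂ : ℝ → EuclideanSpace ℝ (Fin 2))
    (hsep : ∀ t : ℝ, 0 ≤ t → p₁ t ≠ p₂ t)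
    (hp₁ : ∀ t : ℝ, 0 ≤ t →
      HasDerivAt p₁ ((Kd * (‖p₂ t - p₁ t‖ ^ 2 - dstar ^ 2)) • (p₂ t - p₁ t)) t)
    (hp₂ : ∀ t : ℝ, 0 ≤ t →
      HasDerivAt p₂ ((-Kb) • (‖p₂ t - p₁ t‖⁻¹ • (p₂ t - p₁ t) - gstar)) t)
    (hthr : dstar < Real.sqrt 3 * (Kb / Kd) ^ ((1 : ℝ) / 3)) :
    ∃ q₁ : EuclideanSpace ℝ (Fin 2),
      Filter.Tendsto p₁ Filter.atTop (nhds q₁) ∧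
      Filter.Tendsto p₂ Filter.atTop (nhds (q₁ + dstar • gstar)) :=
  stmt_7_general hKd hKb hdstar hgstar hsep (fun t ht => (hp₁ t ht).hasDerivWithinAt)
    (fun t ht => (hp₂ t ht).hasDerivWithinAt) hthr
end

section
/- (Local asymptotic convergence for the (1D2B) setup.) Assume d₁₂* ≥ d̂ and d₁₃* ≥ d̂ where d̂ = √3·(K_b/(2K_d))^(1/3), and g₁₂* ≠ ±g₁₃*. Then there exists δ > 0 such that for every solution p₁, p₂, p₃ : ℝ → ℝ² of the closed-loop (1D2B) dynamics (differentiable curves with p₁(t) ≠ p₂(t), p₁(t) ≠ p₃(t) for all t ≥ 0, satisfying ṗ₁ = K_d·e₁₂d·z₁₂ + K_d·e₁₃d·z₁₃, ṗ₂ = −K_b·e₁₂b, ṗ₃ = −K_b·e₁₃b) whose initial links satisfy ‖z₁₂(0) − d₁₂*·g₁₂*‖ < δ and ‖z₁₃(0) − d₁₃*·g₁₃*‖ < δ, there exist points q₁, q₂, q₃ ∈ ℝ² with q₂ − q₁ = d₁₂*·g₁₂* and q₃ − q₁ = d₁₃*·g₁₃* such that pᵢ(t) → qᵢ as t → ∞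 for i = 1, 2, 3. -/
/-!
The links of the formation obey an autonomous equation, to which Lyapunov's indirect method applies.
Let `u i` be the error of the link `i`, let `a i` and `b i` be its linearised stiffnesses along its
desired bearing `g i` and across it, and let `s = ∑ i, (a i * ⟪g i, u i⟫) • g i` be, up to sign, the
contribution of the hub to the linearised motion of every link. Along the linearised motion
`∑ i, a i * ⟪g i, u i⟫ ^ 2` decreases at the rate `2 * ‖s‖ ^ 2`, and since the bearings are linearly
independent, `‖s‖` controls all the radial errors. Adding a small multiple `ε * ∑ i, ‖u i‖ ^ 2`,
which the leaves damp in the transversal directions, gives a strict Lyapunov function: the cross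
terms `ε * ⟪u i, s⟫` are absorbed by `‖s‖ ^ 2` and the damping. Hence the links converge
exponentially fast, so the velocity of the hub is integrable and every robot has a limit.
-/

open Asymptotics Filter Topology
open scoped RealInnerProductSpace

section Dynamics

theorem le_mul_exp_neg_of_deriv_le {W W' : ℝ → ℝ} {r k l : ℝ} (hr : 0 < r) (hk : 0 ≤ k)
    (hkl : k < l) (hW : ∀ t, 0 ≤ t → HasDerivAt W (W' t) t) (hW₀ : W 0 ≤ r)
    (hW' : ∀ t, 0 ≤ t → W t ≤ r → W' t ≤ -l * W t) {t : ℝ} (ht : 0 ≤ t) :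
    W t ≤ r * Real.exp (-k * t) := by
  have hbarrier (x : ℝ) :
      HasDerivAt (fun x ↦ r * Real.exp (-k * x)) (r * (Real.exp (-k * x) * -k)) x := by
    simpa using (((hasDerivAt_id x).const_mul (-k)).exp).const_mul r
  refine image_le_of_deriv_right_lt_deriv_boundary (a := 0) (b := t)
    (fun x hx ↦ (hW x hx.1).continuousAt.continuousWithinAt)
    (fun x hx ↦ (hW x hx.1).hasDerivWithinAt) (by simpa using hW₀) hbarrier ?_ ⟨ht, le_rfl⟩
  intro x hx hcross
  have hpos : 0 < W x := by rw [hcross]; positivity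
  have hle : W x ≤ r := by
    rw [hcross]
    exact mul_le_of_le_one_right hr.le (Real.exp_le_one_iff.2 (by nlinarith [hx.1]))
  calc W' x ≤ -l * W x := hW' x hx.1 hle
    _ < -k * W x := by gcongr
    _ = r * (Real.exp (-k * x) * -k) := by rw [hcross]; ring

theorem tendsto_exp_neg_mul_atTop {l : ℝ} (hl : 0 < l) :
    Tendsto (fun t : ℝ ↦ Real.exp (-l * t)) atTop (𝓝 0) :=
  Real.tendsto_exp_atBot.comp (tendsto_id.const_mul_atTop_of_neg (neg_lt_zero.2 hl))

variable {E H : Type*} [NormedAddCommGroup E] [NormedSpace ℝ E]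
  [NormedAddCommGroup H] [NormedSpace ℝ H]

theorem exists_tendsto_of_deriv_isBigO_exp_neg [CompleteSpace E] {p v : ℝ → E} {l : ℝ}
    (hl : 0 < l) (hp : ∀ t, 0 ≤ t → HasDerivAt p (v t) t) (hv : ContinuousOn v (Set.Ici 0))
    (hO : v =O[atTop] fun t ↦ Real.exp (-l * t)) : ∃ a, Tendsto p atTop (𝓝 a) := by
  have hint : MeasureTheory.IntegrableOn v (Set.Ioi 0) :=
    ((hv.locallyIntegrableOn measurableSet_Ici).integrableOn_of_isBigO_atTop hO
      ⟨Set.Ioi l, Ioi_mem_atTop l, exp_neg_integrableOn_Ioi l hl⟩).mono_set Set.Ioi_subset_Ici_self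
  exact ⟨_, MeasureTheory.tendsto_limUnder_of_hasDerivAt_of_integrableOn_Ioi
    (fun t ht ↦ hp t (le_of_lt ht)) hint⟩

/-- The point `x₀` attracts, at a common exponential rate, every forward solution of the autonomous
equation `z' = f z` that starts in some ball around it. -/
def IsLocallyExpAttracting (f : H → H) (x₀ : H) : Prop :=
  ∃ δ > 0, ∃ l > 0, ∀ z : ℝ → H, (∀ t, 0 ≤ t → HasDerivAt z (f (z t)) t) → ‖z 0 - x₀‖ < δ →
    (fun t ↦ z t - x₀) =O[atTop] fun t ↦ Real.exp (-l * t)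

theorem eventually_bilin_le_of_hasFDerivAt {f : H → H} {A : H →L[ℝ] H} {x₀ : H}
    (hf : HasFDerivAt f A x₀) (hf₀ : f x₀ = 0) (B : H →L[ℝ] H →L[ℝ] ℝ) {m m' : ℝ} (hm : m' < m)
    (hA : ∀ x, B x (A x) ≤ -m * ‖x‖ ^ 2) :
    ∀ᶠ x in 𝓝 x₀, B (x - x₀) (f x) ≤ -m' * ‖x - x₀‖ ^ 2 := by
  have hc : 0 < (m - m') / (‖B‖ + 1) := div_pos (sub_pos.2 hm) (by positivity)
  filter_upwards [hf.isLittleO.def hc] with x hx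
  rw [hf₀, sub_zero] at hx
  have hrem : B (x - x₀) (f x - A (x - x₀)) ≤ (m - m') * ‖x - x₀‖ ^ 2 :=
    calc B (x - x₀) (f x - A (x - x₀)) ≤ ‖B‖ * ‖x - x₀‖ * ‖f x - A (x - x₀)‖ :=
          (le_abs_self _).trans (B.le_opNorm₂ _ _)
      _ ≤ (‖B‖ + 1) * ‖x - x₀‖ * ((m - m') / (‖B‖ + 1) * ‖x - x₀‖) := by gcongr; linarith
      _ = (m - m') * ‖x - x₀‖ ^ 2 := by field_simp
  rw [map_sub] at hrem
  linarith [hA (x - x₀)]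

theorem bilin_le_mul_exp_neg_of_bilin_le {f : H → H} {x₀ : H} {B : H →L[ℝ] H →L[ℝ] ℝ} {m r : ℝ}
    (hsymm : ∀ x y, B x y = B y x) (hm : 0 < m) (hr : 0 < r)
    (hf : ∀ x, B (x - x₀) (x - x₀) ≤ r → B (x - x₀) (f x) ≤ -m * ‖x - x₀‖ ^ 2) {z : ℝ → H}
    (hz : ∀ t, 0 ≤ t → HasDerivAt z (f (z t)) t) (hz₀ : B (z 0 - x₀) (z 0 - x₀) ≤ r) {t : ℝ}
    (ht : 0 ≤ t) :
    B (z t - x₀) (z t - x₀) ≤ r * Real.exp (-(m / (‖B‖ + 1)) * t) := by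
  set k := m / (‖B‖ + 1) with hk
  have hk₀ : 0 < k := by positivity
  have hderiv (t : ℝ) (ht : 0 ≤ t) :
      HasDerivAt (fun t ↦ B (z t - x₀) (z t - x₀)) (2 * B (z t - x₀) (f (z t))) t := by
    have hy := (hz t ht).sub_const x₀
    convert! B.hasDerivAt_of_bilinear (fun _ ↦ hy) (fun _ ↦ hy) using 1
    rw [hsymm (f (z t))]
    ring
  have hnorm (y : H) : k * B y y ≤ m * ‖y‖ ^ 2 :=
    calc k * B y y ≤ k * (‖B‖ * ‖y‖ * ‖y‖) := by
          gcongr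
          exact (le_abs_self _).trans (B.le_opNorm₂ y y)
      _ ≤ k * ((‖B‖ + 1) * ‖y‖ * ‖y‖) := by
          gcongr
          linarith
      _ = m * ‖y‖ ^ 2 := by rw [hk]; field_simp
  exact le_mul_exp_neg_of_deriv_le hr hk₀.le (by linarith : k < 2 * k) hderiv hz₀
    (fun t _ hle ↦ by linarith [hf (z t) hle, hnorm (z t - x₀)]) ht

theorem isBigO_exp_neg_of_bilin_le {f : H → H} {x₀ : H} {B : H →L[ℝ] H →L[ℝ] ℝ} {c m r : ℝ}
    (hc : 0 < c) (hB : ∀ x, c * ‖x‖ ^ 2 ≤ B x x) (hsymm : ∀ x y, B x y = B y x) (hm : 0 < m)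
    (hr : 0 < r)
    (hf : ∀ x, B (x - x₀) (x - x₀) ≤ r → B (x - x₀) (f x) ≤ -m * ‖x - x₀‖ ^ 2) {z : ℝ → H}
    (hz : ∀ t, 0 ≤ t → HasDerivAt z (f (z t)) t) (hz₀ : B (z 0 - x₀) (z 0 - x₀) ≤ r) :
    (fun t ↦ z t - x₀) =O[atTop] fun t ↦ Real.exp (-(m / (‖B‖ + 1) / 2) * t) := by
  refine IsBigO.of_bound √(r / c) ?_
  filter_upwards [eventually_ge_atTop 0] with t ht
  rw [Real.norm_of_nonneg (Real.exp_pos _).le]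
  refine (pow_le_pow_iff_left₀ (norm_nonneg _) (by positivity) two_ne_zero).1 ?_
  rw [mul_pow, Real.sq_sqrt (by positivity), ← Real.exp_nat_mul, div_mul_eq_mul_div,
    le_div_iff₀' hc]
  calc c * ‖z t - x₀‖ ^ 2 ≤ B (z t - x₀) (z t - x₀) := hB _
    _ ≤ r * Real.exp (-(m / (‖B‖ + 1)) * t) :=
      bilin_le_mul_exp_neg_of_bilin_le hsymm hm hr hf hz hz₀ ht
    _ = r * Real.exp ((2 : ℕ) * (-(m / (‖B‖ + 1) / 2) * t)) := by push_cast; ring_nf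

theorem isLocallyExpAttracting_of_eventually_bilin_le {f : H → H} {x₀ : H}
    {B : H →L[ℝ] H →L[ℝ] ℝ} (hB : IsCoercive B) (hsymm : ∀ x y, B x y = B y x) {m : ℝ}
    (hm : 0 < m) (hf : ∀ᶠ x in 𝓝 x₀, B (x - x₀) (f x) ≤ -m * ‖x - x₀‖ ^ 2) :
    IsLocallyExpAttracting f x₀ := by
  obtain ⟨c, hc, hBc⟩ := hB
  simp only [mul_assoc, ← sq] at hBc
  obtain ⟨ρ, hρ, hball⟩ := Metric.eventually_nhds_iff.1 hf
  set r := c * (ρ / 2) ^ 2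
  have hsublevel (x : H) (hx : B (x - x₀) (x - x₀) ≤ r) : dist x x₀ < ρ := by
    rw [dist_eq_norm]
    have : ‖x - x₀‖ ≤ ρ / 2 :=
      (pow_le_pow_iff_left₀ (norm_nonneg _) (by positivity) two_ne_zero).1
        (le_of_mul_le_mul_left ((hBc _).trans hx) hc)
    linarith
  have hr₀ : 0 < r := by positivity
  obtain ⟨δ, hδ, hstart⟩ : ∃ δ > 0, ∀ x : H, ‖x‖ < δ → B x x ≤ r := by
    have hcont : Continuous fun x : H ↦ B x x := by fun_prop
    simpa [Metric.eventually_nhds_iff] using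
      (hcont.tendsto' 0 0 (by simp)).eventually_le_const hr₀
  exact ⟨δ, hδ, m / (‖B‖ + 1) / 2, by positivity, fun z hz hz₀ ↦
    isBigO_exp_neg_of_bilin_le hc hBc hsymm hm hr₀ (fun x hx ↦ hball (hsublevel x hx)) hz
      (hstart _ hz₀)⟩

theorem isLocallyExpAttracting_of_hasFDerivAt {f : H → H} {A : H →L[ℝ] H} {x₀ : H}
    (hf : HasFDerivAt f A x₀) (hf₀ : f x₀ = 0) {B : H →L[ℝ] H →L[ℝ] ℝ} (hB : IsCoercive B)
    (hsymm : ∀ x y, B x y = B y x) {m : ℝ} (hm : 0 < m) (hA : ∀ x, B x (A x) ≤ -m * ‖x‖ ^ 2) :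
    IsLocallyExpAttracting f x₀ :=
  isLocallyExpAttracting_of_eventually_bilin_le hB hsymm (half_pos hm)
    (eventually_bilin_le_of_hasFDerivAt hf hf₀ B (half_lt_self hm) hA)

end Dynamics

section FiniteFamilies

variable {ι E : Type*} [Fintype ι]

theorem exists_mul_norm_sq_le_sum [SeminormedAddCommGroup E] {b : ι → ℝ} (hb : ∀ i, 0 < b i) :
    ∃ β > 0, ∀ u : ι → E, β * ‖u‖ ^ 2 ≤ ∑ i, b i * ‖u i‖ ^ 2 := by
  have hinv (i : ι) : 0 < (b i)⁻¹ := inv_pos.2 (hb i)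
  have hM : 0 < 1 + ∑ i, (b i)⁻¹ :=
    add_pos_of_pos_of_nonneg one_pos (Finset.sum_nonneg fun i _ ↦ (hinv i).le)
  refine ⟨(1 + ∑ i, (b i)⁻¹)⁻¹, inv_pos.2 hM, fun u ↦ ?_⟩
  have hterm (i : ι) : 0 ≤ b i * ‖u i‖ ^ 2 := mul_nonneg (hb i).le (sq_nonneg _)
  have hsum : 0 ≤ ∑ i, b i * ‖u i‖ ^ 2 := Finset.sum_nonneg fun i _ ↦ hterm i
  rw [inv_mul_le_iff₀ hM]
  refine (Real.le_sqrt (norm_nonneg u) (mul_nonneg hM.le hsum)).1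
    ((pi_norm_le_iff_of_nonneg (Real.sqrt_nonneg _)).2 fun i ↦ Real.le_sqrt_of_sq_le ?_)
  calc ‖u i‖ ^ 2 = (b i)⁻¹ * (b i * ‖u i‖ ^ 2) := (inv_mul_cancel_left₀ (hb i).ne' _).symm
    _ ≤ (1 + ∑ i, (b i)⁻¹) * ∑ i, b i * ‖u i‖ ^ 2 := by
      refine mul_le_mul ?_ ?_ (hterm i) hM.le
      · have := Finset.single_le_sum (fun j _ ↦ (hinv j).le) (Finset.mem_univ i)
        linarith
      · exact Finset.single_le_sum (fun j _ ↦ hterm j) (Finset.mem_univ i)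

theorem exists_sum_mul_sq_le_mul_norm_sq [NormedAddCommGroup E] [NormedSpace ℝ E] {g : ι → E}
    (hg : LinearIndependent ℝ g) {w : ι → ℝ} (hw : ∀ i, 0 ≤ w i) :
    ∃ κ ≥ 0, ∀ x : ι → ℝ, ∑ i, w i * x i ^ 2 ≤ κ * ‖∑ i, x i • g i‖ ^ 2 := by
  obtain ⟨K, -, hK⟩ := (Fintype.linearCombination ℝ g).exists_antilipschitzWith
    (LinearMap.ker_eq_bot.2 (linearIndependent_iff_injective_fintypeLinearCombination.1 hg))
  have hsum : 0 ≤ ∑ i, w i := Finset.sum_nonneg fun i _ ↦ hw i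
  refine ⟨(∑ i, w i) * (K : ℝ) ^ 2, by positivity, fun x ↦ ?_⟩
  have hx : ‖x‖ ≤ K * ‖∑ i, x i • g i‖ := by
    simpa [Fintype.linearCombination_apply] using hK.le_mul_dist x 0
  calc ∑ i, w i * x i ^ 2 ≤ ∑ i, w i * (K * ‖∑ i, x i • g i‖) ^ 2 := by
        refine Finset.sum_le_sum fun i _ ↦ mul_le_mul_of_nonneg_left ?_ (hw i)
        rw [← sq_abs]
        exact pow_le_pow_left₀ (abs_nonneg _) ((norm_le_pi_norm x i).trans hx) 2
    _ = (∑ i, w i) * (K : ℝ) ^ 2 * ‖∑ i, x i • g i‖ ^ 2 := by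
      rw [← Finset.sum_mul, mul_pow, mul_assoc]

end FiniteFamilies

section Controls

variable {E : Type*} [NormedAddCommGroup E] [InnerProductSpace ℝ E]

/-- The velocity `K (‖z‖² - d²) z` by which a distance robot corrects the length of the link `z`
towards the desired distance `d`. -/
noncomputable def distanceControl (K d : ℝ) (z : E) : E := (K * (‖z‖ ^ 2 - d ^ 2)) • z

/-- The velocity `-K (z / ‖z‖ - g)` by which a bearing robot at the end of the link `z` corrects the
direction of the link towards the desired bearing `g`. A link `z = 0` has bearing `0`. -/
noncomputable def bearingControl (K : ℝ) (g z : E) : E := (-K) • (‖z‖⁻¹ • z - g)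

theorem distanceControl_smul_self {g : E} (hg : ‖g‖ = 1) (K d : ℝ) :
    distanceControl K d (d • g) = 0 := by
  simp [distanceControl, norm_smul, hg]

theorem bearingControl_smul_self {g : E} (hg : ‖g‖ = 1) (K : ℝ) {d : ℝ} (hd : 0 < d) :
    bearingControl K g (d • g) = 0 := by
  simp [bearingControl, norm_smul, hg, abs_of_pos hd, smul_smul, hd.ne']

theorem continuous_distanceControl (K d : ℝ) :
    Continuous (distanceControl K d : E → E) := by
  unfold distanceControl
  fun_prop

theorem hasFDerivAt_distanceControl {g : E} (hg : ‖g‖ = 1) (K d : ℝ) :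
    HasFDerivAt (distanceControl K d) ((2 * K * d ^ 2) • InnerProductSpace.rankOne ℝ g g)
      (d • g) := by
  have hgain : HasFDerivAt (fun z : E ↦ K * (‖z‖ ^ 2 - d ^ 2)) (K • 2 • innerSL ℝ (d • g))
      (d • g) :=
    ((hasStrictFDerivAt_norm_sq (d • g)).hasFDerivAt.sub_const _).const_mul K
  refine (hgain.smul (hasFDerivAt_id (d • g))).congr_fderiv ?_
  ext v
  simp only [norm_smul, Real.norm_eq_abs, hg, mul_one, sq_abs, sub_self, mul_zero, zero_smul,
    map_smul, id_eq, zero_add, ContinuousLinearMap.smulRight_apply, smul_apply, coe_innerSL_apply,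
    smul_eq_mul, nsmul_eq_mul, Nat.cast_ofNat, smul_smul, InnerProductSpace.rankOne_apply]
  ring_nf

theorem hasFDerivAt_norm_inv_smul {z : E} (hz : z ≠ 0) :
    HasFDerivAt (fun z : E ↦ ‖z‖⁻¹ • z)
      (‖z‖⁻¹ • (.id ℝ E - InnerProductSpace.rankOne ℝ (‖z‖⁻¹ • z) (‖z‖⁻¹ • z))) z := by
  have hnorm : ‖z‖ ≠ 0 := norm_ne_zero_iff.2 hz
  have hsqrt := (hasStrictFDerivAt_norm_sq z).hasFDerivAt.sqrt (pow_ne_zero 2 hnorm)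
  simp only [Real.sqrt_sq (norm_nonneg _)] at hsqrt
  refine (((hasDerivAt_inv hnorm).comp_hasFDerivAt z hsqrt).smul (hasFDerivAt_id z)).congr_fderiv ?_
  ext v
  simp only [Function.comp_apply, one_div, mul_inv_rev, smul_smul, neg_mul, neg_smul, id_eq,
    add_apply, smul_apply, ContinuousLinearMap.id_apply, ContinuousLinearMap.smulRight_apply,
    neg_apply, coe_innerSL_apply, nsmul_eq_mul, Nat.cast_ofNat, smul_eq_mul, map_smul,
    sub_eq_add_neg, smul_add, smul_neg, InnerProductSpace.rankOne_apply, add_right_inj, neg_inj]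
  field_simp

theorem hasFDerivAt_bearingControl {g : E} (hg : ‖g‖ = 1) (K : ℝ) {d : ℝ} (hd : 0 < d) :
    HasFDerivAt (bearingControl K g)
      (-(K / d) • (.id ℝ E - InnerProductSpace.rankOne ℝ g g)) (d • g) := by
  have hnorm : ‖d • g‖ = d := by rw [norm_smul, hg, mul_one, Real.norm_of_nonneg hd.le]
  have hne : d • g ≠ 0 := norm_ne_zero_iff.1 (hnorm.trans_ne hd.ne')
  refine (((hasFDerivAt_norm_inv_smul hne).sub_const g).const_smul (-K)).congr_fderiv ?_
  rw [hnorm, inv_smul_smul₀ hd.ne', smul_smul, div_eq_mul_inv, neg_mul]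

end Controls

section Star

variable {ι E : Type*} [Fintype ι] [NormedAddCommGroup E] [InnerProductSpace ℝ E]

/-- The velocity of the distance robot at the hub of a star, as a function of the links `z i` to its
neighbours. -/
noncomputable def hubControl (K : ℝ) (d : ι → ℝ) (z : ι → E) : E :=
  ∑ j, distanceControl K (d j) (z j)

/-- The vector field governing the links `z i` of a star with a distance robot at its hub and
bearing robots at its leaves. -/
noncomputable def linkField (Kd Kb : ℝ) (d : ι → ℝ) (g : ι → E) (z : ι → E) : ι → E :=
  fun i ↦ bearingControl Kb (g i) (z i) - hubControl Kd d z

/-- The derivative of `hubControl` at the desired links, where `a j` is the stiffness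
`2 K (d j) ^ 2` of the link `j` along its bearing `g j`. -/
noncomputable def hubLinearization (a : ι → ℝ) (g : ι → E) : (ι → E) →L[ℝ] E :=
  ∑ j, (a j • InnerProductSpace.rankOne ℝ (g j) (g j)) ∘L .proj j

/-- The derivative of `linkField` at the desired links, where `a i` and `b i` are the stiffnesses of
the link `i` along its bearing `g i` and transversally to it. -/
noncomputable def linkLinearization (a b : ι → ℝ) (g : ι → E) : (ι → E) →L[ℝ] (ι → E) :=
  .pi fun i ↦ (-b i • (.id ℝ E - InnerProductSpace.rankOne ℝ (g i) (g i)) : E →L[ℝ] E) ∘L .proj i -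
    hubLinearization a g

/-- The symmetric bilinear form whose quadratic form is the Lyapunov function
`∑ i, (a i * ⟪g i, u i⟫ ^ 2 + ε * ‖u i‖ ^ 2)` of the link errors `u`. -/
noncomputable def lyapunovForm (a : ι → ℝ) (ε : ℝ) (g : ι → E) :
    (ι → E) →L[ℝ] (ι → E) →L[ℝ] ℝ :=
  ∑ i, ((innerSL ℝ : E →L[ℝ] E →L[ℝ] ℝ) ∘L
    (a i • InnerProductSpace.rankOne ℝ (g i) (g i) + ε • .id ℝ E)).bilinearComp (.proj i) (.proj i)

theorem hubLinearization_apply (a : ι → ℝ) (g u : ι → E) :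
    hubLinearization a g u = ∑ j, (a j * ⟪g j, u j⟫) • g j := by
  simp [hubLinearization, smul_smul]

theorem linkLinearization_apply (a b : ι → ℝ) (g u : ι → E) (i : ι) :
    linkLinearization a b g u i =
      -b i • (u i - ⟪g i, u i⟫ • g i) - hubLinearization a g u := by
  simp [linkLinearization]

theorem lyapunovForm_apply (a : ι → ℝ) (ε : ℝ) (g u v : ι → E) :
    lyapunovForm a ε g u v = ∑ i, (a i * (⟪g i, u i⟫ * ⟪g i, v i⟫) + ε * ⟪u i, v i⟫) := by
  have hinner (x y : E) : (innerSL ℝ : E →L[ℝ] E →L[ℝ] ℝ) x y = ⟪x, y⟫ := rfl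
  simp [lyapunovForm, hinner]

theorem lyapunovForm_comm (a : ι → ℝ) (ε : ℝ) (g u v : ι → E) :
    lyapunovForm a ε g u v = lyapunovForm a ε g v u := by
  simp only [lyapunovForm_apply, mul_comm ⟪g _, u _⟫, real_inner_comm]

theorem isCoercive_lyapunovForm {a : ι → ℝ} (ha : ∀ i, 0 ≤ a i) {ε : ℝ} (hε : 0 < ε)
    (g : ι → E) : IsCoercive (lyapunovForm a ε g) := by
  obtain ⟨β, hβ, hbound⟩ := exists_mul_norm_sq_le_sum (ι := ι) (E := E) fun _ ↦ hε
  refine ⟨β, hβ, fun u ↦ ?_⟩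
  rw [mul_assoc, ← sq, lyapunovForm_apply]
  refine (hbound u).trans (Finset.sum_le_sum fun i _ ↦ ?_)
  rw [real_inner_self_eq_norm_sq]
  exact le_add_of_nonneg_left (mul_nonneg (ha i) (mul_self_nonneg _))

theorem lyapunovForm_linkLinearization {g : ι → E} (hg : ∀ i, ‖g i‖ = 1) (a b : ι → ℝ) (ε : ℝ)
    (u : ι → E) :
    lyapunovForm a ε g u (linkLinearization a b g u) =
      -(‖hubLinearization a g u‖ ^ 2 + ε * ∑ i, (b i * (‖u i‖ ^ 2 - ⟪g i, u i⟫ ^ 2) +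
        ⟪u i, hubLinearization a g u⟫)) := by
  set s := hubLinearization a g u with hs
  have hradial (i : ι) : ⟪g i, linkLinearization a b g u i⟫ = -⟪g i, s⟫ := by
    rw [linkLinearization_apply]
    simp [inner_sub_right, inner_smul_right, hg, hs]
  have hfull (i : ι) : ⟪u i, linkLinearization a b g u i⟫ =
      -(b i * (‖u i‖ ^ 2 - ⟪g i, u i⟫ ^ 2) + ⟪u i, s⟫) := by
    rw [linkLinearization_apply]
    simp only [inner_sub_right, inner_smul_right, real_inner_self_eq_norm_sq,
      real_inner_comm (g i) (u i)]
    ring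
  have hnorm : ‖s‖ ^ 2 = ∑ i, a i * (⟪g i, u i⟫ * ⟪g i, s⟫) := by
    rw [← real_inner_self_eq_norm_sq]
    nth_rewrite 1 [hs]
    simp only [hubLinearization_apply, sum_inner, real_inner_smul_left, mul_assoc]
  simp only [lyapunovForm_apply, hradial, hfull, hnorm, Finset.mul_sum, ← Finset.sum_add_distrib,
    ← Finset.sum_neg_distrib]
  exact Finset.sum_congr rfl fun i _ ↦ by ring

theorem exists_sum_mul_inner_sq_le {g : ι → E} (hli : LinearIndependent ℝ g) {a b : ι → ℝ}
    (ha : ∀ i, a i ≠ 0) (hb : ∀ i, 0 ≤ b i) :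
    ∃ κ ≥ 0, ∀ u : ι → E, ∑ i, b i * ⟪g i, u i⟫ ^ 2 ≤ κ * ‖hubLinearization a g u‖ ^ 2 := by
  obtain ⟨κ, hκ, hbound⟩ := exists_sum_mul_sq_le_mul_norm_sq hli (w := fun i ↦ b i / a i ^ 2)
    fun i ↦ div_nonneg (hb i) (sq_nonneg _)
  refine ⟨κ, hκ, fun u ↦ ?_⟩
  calc ∑ i, b i * ⟪g i, u i⟫ ^ 2 = ∑ i, b i / a i ^ 2 * (a i * ⟪g i, u i⟫) ^ 2 :=
        Finset.sum_congr rfl fun i _ ↦ by field_simp [ha i]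
    _ ≤ κ * ‖hubLinearization a g u‖ ^ 2 := by
      rw [hubLinearization_apply]
      exact hbound _

theorem exists_lyapunovForm_linkLinearization_le {g : ι → E} (hg : ∀ i, ‖g i‖ = 1)
    (hli : LinearIndependent ℝ g) {a b : ι → ℝ} (ha : ∀ i, a i ≠ 0) (hb : ∀ i, 0 < b i) :
    ∃ ε > 0, ∃ m > 0, ∀ u : ι → E,
      lyapunovForm a ε g u (linkLinearization a b g u) ≤ -m * ‖u‖ ^ 2 := by
  obtain ⟨κ, hκ, hradial⟩ := exists_sum_mul_inner_sq_le hli ha fun i ↦ (hb i).le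
  obtain ⟨β, hβ, hcoercive⟩ := exists_mul_norm_sq_le_sum (E := E) hb
  set σ := ∑ i, (b i)⁻¹ with hσ
  have hσ₀ : 0 ≤ σ := Finset.sum_nonneg fun i _ ↦ (inv_pos.2 (hb i)).le
  set ε := (κ + σ / 2 + 1)⁻¹ with hε
  have hε₀ : 0 < ε := by positivity
  have hε₁ : ε * (κ + σ / 2) ≤ 1 := by
    rw [hε, inv_mul_le_one₀ (by positivity)]
    linarith
  refine ⟨ε, hε₀, ε * β / 2, by positivity, fun u ↦ ?_⟩
  rw [lyapunovForm_linkLinearization hg]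
  set s := hubLinearization a g u
  have hyoung (i : ι) : -⟪u i, s⟫ ≤ b i * ‖u i‖ ^ 2 / 2 + (b i)⁻¹ * (‖s‖ ^ 2 / 2) := by
    have hcs : -⟪u i, s⟫ ≤ ‖u i‖ * ‖s‖ := (neg_le_abs _).trans (abs_real_inner_le_norm _ _)
    linarith [two_mul_le_add_mul_sq (a := ‖u i‖) (b := ‖s‖) (hb i)]
  have hcross : -∑ i, ⟪u i, s⟫ ≤ (∑ i, b i * ‖u i‖ ^ 2) / 2 + σ * (‖s‖ ^ 2 / 2) := by
    rw [hσ, Finset.sum_div, Finset.sum_mul, ← Finset.sum_add_distrib, ← Finset.sum_neg_distrib]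
    exact Finset.sum_le_sum fun i _ ↦ hyoung i
  have hsum : ∑ i, (b i * (‖u i‖ ^ 2 - ⟪g i, u i⟫ ^ 2) + ⟪u i, s⟫) ≥
      β * ‖u‖ ^ 2 / 2 - (κ + σ / 2) * ‖s‖ ^ 2 := by
    simp only [mul_sub, Finset.sum_add_distrib, Finset.sum_sub_distrib]
    linarith [hradial u, hcoercive u]
  have habsorb : ε * (κ + σ / 2) * ‖s‖ ^ 2 ≤ ‖s‖ ^ 2 :=
    mul_le_of_le_one_left (sq_nonneg _) hε₁
  linarith [mul_le_mul_of_nonneg_left hsum hε₀.le]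

theorem hasFDerivAt_hubControl {g : ι → E} (hg : ∀ i, ‖g i‖ = 1) (K : ℝ) (d : ι → ℝ) :
    HasFDerivAt (hubControl K d) (hubLinearization (fun i ↦ 2 * K * d i ^ 2) g)
      fun i ↦ d i • g i :=
  .fun_sum fun j _ ↦ HasFDerivAt.comp (g := distanceControl K (d j)) (f := fun z : ι → E ↦ z j) _
    (hasFDerivAt_distanceControl (hg j) K (d j)) (hasFDerivAt_apply j _)

theorem hasFDerivAt_linkField {g : ι → E} (hg : ∀ i, ‖g i‖ = 1) (Kd Kb : ℝ) {d : ι → ℝ}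
    (hd : ∀ i, 0 < d i) :
    HasFDerivAt (linkField Kd Kb d g)
      (linkLinearization (fun i ↦ 2 * Kd * d i ^ 2) (fun i ↦ Kb / d i) g) fun i ↦ d i • g i :=
  hasFDerivAt_pi.2 fun i ↦
    (HasFDerivAt.comp (g := bearingControl Kb (g i)) (f := fun z : ι → E ↦ z i) _
      (hasFDerivAt_bearingControl (hg i) Kb (hd i)) (hasFDerivAt_apply i _)).fun_sub
      (hasFDerivAt_hubControl hg Kd d)

theorem hubControl_smul_self {g : ι → E} (hg : ∀ i, ‖g i‖ = 1) (K : ℝ) (d : ι → ℝ) :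
    hubControl K d (fun i ↦ d i • g i) = 0 :=
  Finset.sum_eq_zero fun i _ ↦ distanceControl_smul_self (hg i) K (d i)

theorem continuous_hubControl (K : ℝ) (d : ι → ℝ) :
    Continuous (hubControl K d : (ι → E) → E) :=
  continuous_finsetSum _ fun i _ ↦ (continuous_distanceControl K (d i)).comp (continuous_apply i)

theorem isLocallyExpAttracting_linkField {g : ι → E} (hg : ∀ i, ‖g i‖ = 1)
    (hli : LinearIndependent ℝ g) {Kd Kb : ℝ} (hKd : 0 < Kd) (hKb : 0 < Kb) {d : ι → ℝ}
    (hd : ∀ i, 0 < d i) :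
    IsLocallyExpAttracting (linkField Kd Kb d g) fun i ↦ d i • g i := by
  have ha (i : ι) : 0 < 2 * Kd * d i ^ 2 := mul_pos (by positivity) (pow_pos (hd i) 2)
  obtain ⟨ε, hε, m, hm, hdecrease⟩ := exists_lyapunovForm_linkLinearization_le hg hli
    (fun i ↦ (ha i).ne') fun i ↦ div_pos hKb (hd i)
  have hequilibrium : linkField Kd Kb d g (fun i ↦ d i • g i) = 0 := by
    ext1 i
    simp [linkField, bearingControl_smul_self (hg i) Kb (hd i), hubControl_smul_self hg]
  exact isLocallyExpAttracting_of_hasFDerivAt (hasFDerivAt_linkField hg Kd Kb hd) hequilibrium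
    (isCoercive_lyapunovForm (fun i ↦ (ha i).le) hε g) (lyapunovForm_comm _ ε g) hm hdecrease

/-- The closed-loop motion, on `[0, ∞)`, of a distance robot `p` at the hub of a star and bearing
robots `q i` at its leaves, with desired distances `d i` and desired bearings `g i`. -/
structure IsStarMotion (Kd Kb : ℝ) (d : ι → ℝ) (g : ι → E) (p : ℝ → E) (q : ι → ℝ → E) :
    Prop where
  hub : ∀ t, 0 ≤ t → HasDerivAt p (hubControl Kd d fun i ↦ q i t - p t) t
  leaf : ∀ i t, 0 ≤ t → HasDerivAt (q i) (bearingControl Kb (g i) (q i t - p t)) t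

theorem IsStarMotion.hasDerivAt_links {Kd Kb : ℝ} {d : ι → ℝ} {g : ι → E} {p : ℝ → E}
    {q : ι → ℝ → E} (h : IsStarMotion Kd Kb d g p q) {t : ℝ} (ht : 0 ≤ t) :
    HasDerivAt (fun t i ↦ q i t - p t) (linkField Kd Kb d g fun i ↦ q i t - p t) t :=
  hasDerivAt_pi.2 fun i ↦ (h.leaf i t ht).sub (h.hub t ht)

theorem IsStarMotion.exists_tendsto [CompleteSpace E] {g : ι → E} (hg : ∀ i, ‖g i‖ = 1)
    {Kd Kb : ℝ} {d : ι → ℝ} {p : ℝ → E} {q : ι → ℝ → E} (h : IsStarMotion Kd Kb d g p q) {l : ℝ}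
    (hl : 0 < l) (hlinks : (fun t ↦ (fun i ↦ q i t - p t) - fun i ↦ d i • g i) =O[atTop]
      fun t ↦ Real.exp (-l * t)) :
    ∃ a, Tendsto p atTop (𝓝 a) ∧ ∀ i, Tendsto (q i) atTop (𝓝 (a + d i • g i)) := by
  have hlim : Tendsto (fun t i ↦ q i t - p t) atTop (𝓝 fun i ↦ d i • g i) :=
    tendsto_sub_nhds_zero_iff.1 (hlinks.trans_tendsto (tendsto_exp_neg_mul_atTop hl))
  have hhub : (fun t ↦ hubControl Kd d fun i ↦ q i t - p t) =O[atTop]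
      fun t ↦ Real.exp (-l * t) := by
    have := (hasFDerivAt_hubControl hg Kd d).isBigO_sub.comp_tendsto hlim
    simp only [hubControl_smul_self hg, sub_zero] at this
    exact this.trans hlinks
  have hcont : ContinuousOn (fun t ↦ hubControl Kd d fun i ↦ q i t - p t) (Set.Ici 0) :=
    (continuous_hubControl Kd d).comp_continuousOn fun t ht ↦
      (h.hasDerivAt_links ht).continuousAt.continuousWithinAt
  obtain ⟨a, ha⟩ := exists_tendsto_of_deriv_isBigO_exp_neg hl h.hub hcont hhub
  exact ⟨a, ha, fun i ↦ by simpa using ha.add (tendsto_pi_nhds.1 hlim i)⟩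

theorem exists_forall_isStarMotion_tendsto [CompleteSpace E] {g : ι → E} (hg : ∀ i, ‖g i‖ = 1)
    (hli : LinearIndependent ℝ g) {Kd Kb : ℝ} (hKd : 0 < Kd) (hKb : 0 < Kb) {d : ι → ℝ}
    (hd : ∀ i, 0 < d i) :
    ∃ δ > 0, ∀ p q, IsStarMotion Kd Kb d g p q → (∀ i, ‖q i 0 - p 0 - d i • g i‖ < δ) →
      ∃ a, Tendsto p atTop (𝓝 a) ∧ ∀ i, Tendsto (q i) atTop (𝓝 (a + d i • g i)) := by
  obtain ⟨δ, hδ, l, hl, hattract⟩ := isLocallyExpAttracting_linkField hg hli hKd hKb hd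
  refine ⟨δ, hδ, fun p q h hinit ↦ h.exists_tendsto hg hl ?_⟩
  exact hattract _ (fun t ht ↦ h.hasDerivAt_links ht) ((pi_norm_lt_iff hδ).2 hinit)

end Star

theorem linearIndependent_pair_of_norm_eq_one {E : Type*} [NormedAddCommGroup E]
    [NormedSpace ℝ E] {x y : E} (hx : ‖x‖ = 1) (hy : ‖y‖ = 1) (hne : x ≠ y) (hne' : x ≠ -y) :
    LinearIndependent ℝ ![x, y] := by
  refine (LinearIndependent.pair_iff' (norm_ne_zero_iff.1 (hx.trans_ne one_ne_zero))).2 ?_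
  rintro c rfl
  rw [norm_smul, hx, mul_one, Real.norm_eq_abs] at hy
  rcases eq_or_eq_neg_of_abs_eq hy with rfl | rfl
  · exact hne (one_smul ℝ x).symm
  · exact hne' (by simp)

theorem stmt_11_general {E : Type*} [NormedAddCommGroup E] [InnerProductSpace ℝ E]
    [CompleteSpace E] {Kd Kb d12s d13s : ℝ} (hKd : 0 < Kd) (hKb : 0 < Kb)
    (hd12s : 0 < d12s) (hd13s : 0 < d13s) {g12s g13s : E} (hg12s : ‖g12s‖ = 1)
    (hg13s : ‖g13s‖ = 1) (hne : g12s ≠ g13s) (hne' : g12s ≠ -g13s) :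
    ∃ δ : ℝ, 0 < δ ∧
      ∀ p₁ p₂ p₃ : ℝ → E,
        (∀ t : ℝ, 0 ≤ t → HasDerivAt p₁
          ((Kd * (‖p₂ t - p₁ t‖ ^ 2 - d12s ^ 2)) • (p₂ t - p₁ t) +
           (Kd * (‖p₃ t - p₁ t‖ ^ 2 - d13s ^ 2)) • (p₃ t - p₁ t)) t) →
        (∀ t : ℝ, 0 ≤ t → HasDerivAt p₂
          ((-Kb) • (‖p₂ t - p₁ t‖⁻¹ • (p₂ t - p₁ t) - g12s)) t) →
        (∀ t : ℝ, 0 ≤ t → HasDerivAt p₃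
          ((-Kb) • (‖p₃ t - p₁ t‖⁻¹ • (p₃ t - p₁ t) - g13s)) t) →
        ‖(p₂ 0 - p₁ 0) - d12s • g12s‖ < δ →
        ‖(p₃ 0 - p₁ 0) - d13s • g13s‖ < δ →
        ∃ q₁ q₂ q₃ : E,
          q₂ - q₁ = d12s • g12s ∧ q₃ - q₁ = d13s • g13s ∧
          Tendsto p₁ atTop (𝓝 q₁) ∧ Tendsto p₂ atTop (𝓝 q₂) ∧ Tendsto p₃ atTop (𝓝 q₃) := by
  obtain ⟨δ, hδ, hconv⟩ := exists_forall_isStarMotion_tendsto (g := ![g12s, g13s])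
    (d := ![d12s, d13s]) (Fin.forall_fin_two.2 ⟨hg12s, hg13s⟩)
    (linearIndependent_pair_of_norm_eq_one hg12s hg13s hne hne') hKd hKb
    (Fin.forall_fin_two.2 ⟨hd12s, hd13s⟩)
  refine ⟨δ, hδ, fun p₁ p₂ p₃ hp₁ hp₂ hp₃ hinit₂ hinit₃ ↦ ?_⟩
  have hmotion : IsStarMotion Kd Kb ![d12s, d13s] ![g12s, g13s] p₁ ![p₂, p₃] :=
    { hub := fun t ht ↦ by
        simpa [hubControl, distanceControl, Fin.sum_univ_two] using hp₁ t ht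
      leaf := Fin.forall_fin_two.2 ⟨hp₂, hp₃⟩ }
  obtain ⟨a, ha, hleaf⟩ := hconv _ _ hmotion (Fin.forall_fin_two.2 ⟨hinit₂, hinit₃⟩)
  exact ⟨a, _, _, add_sub_cancel_left _ _, add_sub_cancel_left _ _, ha, hleaf 0, hleaf 1⟩

/-- local asymptotic convergence for the (1D2B) setup: if
`d₁₂*, d₁₃* ≥ √3·(K_b/(2K_d))^(1/3)` and `g₁₂* ≠ ±g₁₃*`, then trajectories whose
initial links are close enough to the desired links converge to a formation
realizing the desired shape. -/
theorem stmt_11 (Kd Kb d12s d13s : ℝ) (hKd : 0 < Kd) (hKb : 0 < Kb)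
    (hd12s : 0 < d12s) (hd13s : 0 < d13s)
    (g12s g13s : EuclideanSpace ℝ (Fin 2))
    (hg12s : ‖g12s‖ = 1) (hg13s : ‖g13s‖ = 1)
    (hne : g12s ≠ g13s) (hne' : g12s ≠ -g13s)
    (hthr12 : Real.sqrt 3 * (Kb / (2 * Kd)) ^ ((1 : ℝ) / 3) ≤ d12s)
    (hthr13 : Real.sqrt 3 * (Kb / (2 * Kd)) ^ ((1 : ℝ) / 3) ≤ d13s) :
    ∃ δ : ℝ, 0 < δ ∧
      ∀ p₁ p₂ p₃ : ℝ → EuclideanSpace ℝ (Fin 2),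
        (∀ t : ℝ, 0 ≤ t → p₁ t ≠ p₂ t) →
        (∀ t : ℝ, 0 ≤ t → p₁ t ≠ p₃ t) →
        (∀ t : ℝ, 0 ≤ t → HasDerivAt p₁
          ((Kd * (‖p₂ t - p₁ t‖ ^ 2 - d12s ^ 2)) • (p₂ t - p₁ t) +
           (Kd * (‖p₃ t - p₁ t‖ ^ 2 - d13s ^ 2)) • (p₃ t - p₁ t)) t) →
        (∀ t : ℝ, 0 ≤ t → HasDerivAt p₂
          ((-Kb) • (‖p₂ t - p₁ t‖⁻¹ • (p₂ t - p₁ t) - g12s)) t) →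
        (∀ t : ℝ, 0 ≤ t → HasDerivAt p₃
          ((-Kb) • (‖p₃ t - p₁ t‖⁻¹ • (p₃ t - p₁ t) - g13s)) t) →
        ‖(p₂ 0 - p₁ 0) - d12s • g12s‖ < δ →
        ‖(p₃ 0 - p₁ 0) - d13s • g13s‖ < δ →
        ∃ q₁ q₂ q₃ : EuclideanSpace ℝ (Fin 2),
          q₂ - q₁ = d12s • g12s ∧ q₃ - q₁ = d13s • g13s ∧
          Filter.Tendsto p₁ Filter.atTop (nhds q₁) ∧
          Filter.Tendsto p₂ Filter.atTop (nhds q₂) ∧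
          Filter.Tendsto p₃ Filter.atTop (nhds q₃) :=
  have ⟨δ, hδ, hconv⟩ := stmt_11_general hKd hKb hd12s hd13s hg12s hg13s hne hne'
  ⟨δ, hδ, fun p₁ p₂ p₃ _ _ ↦ hconv p₁ p₂ p₃⟩
end
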